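/- Let X₁, X₂ be locally compact Polish metric spaces, C : X₁ × 𝒫(X₂) → (−∞,+∞] lower semi-continuous, bounded from below, with C(x₁,·) convex for every x₁, and let F₁, F₂ be superlinear admissible entropy functions such that F₂ has property (BM) on X₂. Then for every μ₁ ∈ ℳ(X₁), μ₂ ∈ ℳ(X₂): sup_{(φ₁,φ₂)∈Λ_R} Σ_{i=1}^2 ∫_{X_i} φ_i dμ_i = sup_{(φ₁,φ₂)∈Λ} Σ_{i=1}^2 ∫_{X_i} F_i°(φ_i) dμ_i. -/

import Mathlib

open MeasureTheory Filter Set Topology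
open scoped ENNReal NNReal BoundedContinuousFunction

noncomputable section

/-- The "positive part" of an extended real number, as an element of `ℝ≥0∞`. -/
def posE (a : EReal) : ℝ≥0∞ := if a = ⊤ then ⊤ else ENNReal.ofReal a.toReal

/-- Integral of an `EReal`-valued function: positive part minus negative part
(in `EReal`, so that it is always defined). -/
def eIntegral {α : Type*} [MeasurableSpace α] (μ : Measure α) (f : α → EReal) : EReal :=
  ((∫⁻ x, posE (f x) ∂μ : ℝ≥0∞) : EReal) - ((∫⁻ x, posE (-(f x)) ∂μ : ℝ≥0∞) : EReal)

/-- The recession constant `lim_{s→∞} G(s)/s` (as a `limsup`, which coincides with the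
limit for convex functions). -/
def recessionOf (G : ℝ → ℝ≥0∞) : ℝ≥0∞ :=
  Filter.limsup (fun s : ℝ => G s / ENNReal.ofReal s) Filter.atTop

/-- An admissible entropy function: a convex, lower semicontinuous function
`F : [0,∞) → [0,∞]` which is finite at some positive point. -/
structure EntropyFn where
  F : ℝ → ℝ≥0∞
  convex' : ∀ a ∈ Ici (0:ℝ), ∀ b ∈ Ici (0:ℝ), ∀ t : ℝ, 0 ≤ t → t ≤ 1 →
    F (t * a + (1 - t) * b) ≤ ENNReal.ofReal t * F a + ENNReal.ofReal (1 - t) * F b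
  lsc : LowerSemicontinuousOn F (Ici (0:ℝ))
  dom : ∃ s : ℝ, 0 < s ∧ F s ≠ ∞

namespace EntropyFn

/-- The recession constant `F'_∞ = lim_{s→∞} F(s)/s`. -/
def recC (F : EntropyFn) : ℝ≥0∞ := recessionOf F.F

/-- `F` is superlinear if `F'_∞ = ∞`. -/
def Superlinear (F : EntropyFn) : Prop := F.recC = ∞

/-- `F°(φ) := inf_{s ≥ 0} (φ·s + F(s))`, extended to `EReal` arguments. -/
def circ (F : EntropyFn) (φ : EReal) : EReal :=
  ⨅ s : Ici (0:ℝ), φ * ((s : ℝ) : EReal) + ((F.F (s : ℝ) : ℝ≥0∞) : EReal)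

/-- The (interior of the) domain of `F°` is taken inside the set where `F°` is not `-∞`. -/
def circDom (F : EntropyFn) : Set ℝ := {φ : ℝ | F.circ (φ : EReal) ≠ ⊥}

/-- The reverse entropy function `R(r) = r·F(1/r)` for `r > 0`, with `R(0) = F'_∞`. -/
def revF (F : EntropyFn) (r : ℝ) : ℝ≥0∞ :=
  if 0 < r then ENNReal.ofReal r * F.F (1 / r) else F.recC

/-- The Legendre conjugate `R*(ψ) = sup_{s ≥ 0} (s·ψ − R(s))` of the reverse function. -/
def revConj (F : EntropyFn) (ψ : ℝ) : EReal :=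
  ⨆ s : Ici (0:ℝ), (((s : ℝ) * ψ : ℝ) : EReal) - ((F.revF (s : ℝ) : ℝ≥0∞) : EReal)

end EntropyFn

/-- The entropy functional `ℱ(γ|μ) = ∫ F(dγ/dμ) dμ + F'_∞ · γ^⊥(X)`, where
`γ = (dγ/dμ)·μ + γ^⊥` is the Lebesgue decomposition of `γ` with respect to `μ`. -/
def entF {X : Type*} [MeasurableSpace X] (F : EntropyFn) (γ μ : Measure X) : ℝ≥0∞ :=
  (∫⁻ x, F.F ((γ.rnDeriv μ x).toReal) ∂μ) + F.recC * (γ.singularPart μ) Set.univ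

/-- The reverse entropy functional `ℛ(μ|γ) = ∫ R(dμ/dγ) dγ + R'_∞ · μ^⊥(X)`. -/
def revEntF {X : Type*} [MeasurableSpace X] (F : EntropyFn) (μ γ : Measure X) : ℝ≥0∞ :=
  (∫⁻ x, F.revF ((μ.rnDeriv γ x).toReal) ∂γ) + recessionOf F.revF * (μ.singularPart γ) Set.univ

section WOET

variable {X₁ X₂ : Type*} [MeasurableSpace X₁] [MeasurableSpace X₂]

/-- The weak entropy-transport cost
`ℰ_C(γ|μ₁,μ₂) = ℱ₁(γ₁|μ₁) + ℱ₂(γ₂|μ₂) + ∫ C(x₁, γ_{x₁}) dγ₁(x₁)`. -/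
def wCost [StandardBorelSpace X₂] [Nonempty X₂]
    (C : X₁ → ProbabilityMeasure X₂ → EReal) (F₁ F₂ : EntropyFn)
    (μ₁ : Measure X₁) (μ₂ : Measure X₂)
    (γ : Measure (X₁ × X₂)) (hγ : IsFiniteMeasure γ) : EReal :=
  haveI := hγ
  ((entF F₁ γ.fst μ₁ : ℝ≥0∞) : EReal) + ((entF F₂ γ.snd μ₂ : ℝ≥0∞) : EReal) +
    eIntegral γ.fst (fun x₁ => C x₁ ⟨γ.condKernel x₁, inferInstance⟩)

/-- The weak optimal entropy-transport value `ℰ_C(μ₁,μ₂)`. -/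
def wOpt [StandardBorelSpace X₂] [Nonempty X₂]
    (C : X₁ → ProbabilityMeasure X₂ → EReal) (F₁ F₂ : EntropyFn)
    (μ₁ : Measure X₁) (μ₂ : Measure X₂) : EReal :=
  sInf { e : EReal | ∃ (γ : Measure (X₁ × X₂)) (hγ : IsFiniteMeasure γ),
    e = wCost C F₁ F₂ μ₁ μ₂ γ hγ }

variable [TopologicalSpace X₁] [TopologicalSpace X₂]

/-- The dual feasible set `Λ`. -/
def lamSet (C : X₁ → ProbabilityMeasure X₂ → EReal) (F₁ F₂ : EntropyFn) :
    Set ((X₁ →ᵇ ℝ) × (X₂ →ᵇ ℝ)) :=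
  { φ | (∀ x, φ.1 x ∈ interior F₁.circDom) ∧ (∀ x, φ.2 x ∈ interior F₂.circDom) ∧
      ∀ (x₁ : X₁) (p : ProbabilityMeasure X₂),
        ((φ.1 x₁ + ∫ x₂, φ.2 x₂ ∂(p : Measure X₂) : ℝ) : EReal) ≤ C x₁ p }

/-- The dual feasible set `Λ_R`. -/
def lamRSet (C : X₁ → ProbabilityMeasure X₂ → EReal) (F₁ F₂ : EntropyFn) :
    Set ((X₁ →ᵇ ℝ) × (X₂ →ᵇ ℝ)) :=
  { φ | (∃ b : ℝ, ((b : ℝ) : EReal) < ((F₁.F 0 : ℝ≥0∞) : EReal) ∧ ∀ x, φ.1 x ≤ b) ∧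
        (∃ b : ℝ, ((b : ℝ) : EReal) < ((F₂.F 0 : ℝ≥0∞) : EReal) ∧ ∀ x, φ.2 x ≤ b) ∧
        ∀ (x₁ : X₁) (p : ProbabilityMeasure X₂),
          F₁.revConj (φ.1 x₁) + eIntegral (p : Measure X₂) (fun x₂ => F₂.revConj (φ.2 x₂))
            ≤ C x₁ p }

/-- The dual feasible set `Λ_ET` (constraints tested against all pairs of nonnegative finite
measures; on all other signed measures `ET = +∞`, so those constraints are vacuous). -/
def lamETSet [StandardBorelSpace X₂] [Nonempty X₂]
    (C : X₁ → ProbabilityMeasure X₂ → EReal) (F₁ F₂ : EntropyFn) :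
    Set ((X₁ →ᵇ ℝ) × (X₂ →ᵇ ℝ)) :=
  { φ | ∀ (μ₁ : Measure X₁) (μ₂ : Measure X₂), IsFiniteMeasure μ₁ → IsFiniteMeasure μ₂ →
      (((∫ x, φ.1 x ∂μ₁) + ∫ x, φ.2 x ∂μ₂ : ℝ) : EReal) ≤ wOpt C F₁ F₂ μ₁ μ₂ }

/-- The set `Λ_ET^<`. -/
def lamETltSet [StandardBorelSpace X₂] [Nonempty X₂]
    (C : X₁ → ProbabilityMeasure X₂ → EReal) (F₁ F₂ : EntropyFn) :
    Set ((X₁ →ᵇ ℝ) × (X₂ →ᵇ ℝ)) :=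
  { φ ∈ lamETSet C F₁ F₂ |
      (∃ b : ℝ, ((b : ℝ) : EReal) < ((F₁.F 0 : ℝ≥0∞) : EReal) ∧ ∀ x, φ.1 x ≤ b) ∧
      (∃ b : ℝ, ((b : ℝ) : EReal) < ((F₂.F 0 : ℝ≥0∞) : EReal) ∧ ∀ x, φ.2 x ≤ b) }

/-- `R_C φ(x₁) := inf_{p ∈ 𝒫(X₂)} (C(x₁,p) + ∫ φ dp)`. -/
def RCfun (C : X₁ → ProbabilityMeasure X₂ → EReal) (φ : X₂ →ᵇ ℝ) (x₁ : X₁) : EReal :=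
  ⨅ p : ProbabilityMeasure X₂, C x₁ p + ((∫ x₂, φ x₂ ∂(p : Measure X₂) : ℝ) : EReal)

/-- Property (BM) of an admissible entropy function on a space `X`. -/
def HasBM (X : Type*) [TopologicalSpace X] [MeasurableSpace X] (F : EntropyFn) : Prop :=
  ∀ ψ : X →ᵇ ℝ, (∃ b : ℝ, ((b : ℝ) : EReal) < ((F.F 0 : ℝ≥0∞) : EReal) ∧ ∀ x, ψ x ≤ b) →
    ∃ s : X → ℝ, Measurable s ∧ (∃ M : ℝ, ∀ x, |s x| ≤ M) ∧ (∀ x, 0 < s x) ∧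
      ∀ x, ((F.revF (s x) : ℝ≥0∞) : EReal) + F.revConj (ψ x) = ((s x * ψ x : ℝ) : EReal)

end WOET

/-- The functional `ET` extended to pairs of finite signed measures:
it equals `ℰ_C(μ₁,μ₂)` when both arguments are (induced by) nonnegative finite measures,
and `+∞` otherwise. -/
def ETsgn {X₁ X₂ : Type*} [MeasurableSpace X₁] [MeasurableSpace X₂]
    [StandardBorelSpace X₂] [Nonempty X₂]
    (C : X₁ → ProbabilityMeasure X₂ → EReal) (F₁ F₂ : EntropyFn)
    (ν₁ : SignedMeasure X₁) (ν₂ : SignedMeasure X₂) : EReal :=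
  sInf { e : EReal | ∃ (μ₁ : Measure X₁) (h₁ : IsFiniteMeasure μ₁)
      (μ₂ : Measure X₂) (h₂ : IsFiniteMeasure μ₂),
      ν₁ = @Measure.toSignedMeasure X₁ _ μ₁ h₁ ∧ ν₂ = @Measure.toSignedMeasure X₂ _ μ₂ h₂ ∧
      e = wOpt C F₁ F₂ μ₁ μ₂ }

section Martingale

variable {X : Set ℝ}

/-- The martingale condition for a finite measure on `X × X`:
`∫ y dγ_x(y) = x` for `γ₁`-a.e. `x`. -/
def martCond [StandardBorelSpace ↥X] [Nonempty ↥X]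
    (γ : Measure (↥X × ↥X)) (hγ : IsFiniteMeasure γ) : Prop :=
  haveI := hγ
  ∀ᵐ x ∂γ.fst, (∫ y, (y : ℝ) ∂(γ.condKernel x)) = (x : ℝ)

/-- The martingale optimal entropy transport value `ℰ_M(μ₁,μ₂)` (with an `EReal`-valued
cost `c`). -/
def eMart [StandardBorelSpace ↥X] [Nonempty ↥X]
    (c : ↥X → ↥X → EReal) (F₁ F₂ : EntropyFn) (μ₁ μ₂ : Measure ↥X) : EReal :=
  sInf { e : EReal | ∃ (γ : Measure (↥X × ↥X)) (hγ : IsFiniteMeasure γ), martCond γ hγ ∧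
    e = ((entF F₁ γ.fst μ₁ : ℝ≥0∞) : EReal) + ((entF F₂ γ.snd μ₂ : ℝ≥0∞) : EReal) +
        eIntegral γ (fun q => c q.1 q.2) }

/-- The martingale optimal entropy transport value `ℰ_M(μ₁,μ₂)` (with a `[0,∞]`-valued
cost `c`). -/
def eMartNN [StandardBorelSpace ↥X] [Nonempty ↥X]
    (c : ↥X → ↥X → ℝ≥0∞) (F₁ F₂ : EntropyFn) (μ₁ μ₂ : Measure ↥X) : EReal :=
  sInf { e : EReal | ∃ (γ : Measure (↥X × ↥X)) (hγ : IsFiniteMeasure γ), martCond γ hγ ∧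
    e = ((entF F₁ γ.fst μ₁ + entF F₂ γ.snd μ₂ + ∫⁻ q, c q.1 q.2 ∂γ : ℝ≥0∞) : EReal) }

/-- The dual feasible set `Λ_M` for the martingale problem. -/
def lamM (c : ↥X → ↥X → EReal) (F₁ F₂ : EntropyFn) : Set ((↥X →ᵇ ℝ) × (↥X →ᵇ ℝ)) :=
  { φ | (∀ x, φ.1 x ∈ interior F₁.circDom) ∧ (∀ x, φ.2 x ∈ interior F₂.circDom) ∧
      ∃ h : ↥X →ᵇ ℝ, ∀ x₁ x₂ : ↥X,
        ((φ.1 x₁ + φ.2 x₂ + h x₁ * ((x₂ : ℝ) - (x₁ : ℝ)) : ℝ) : EReal) ≤ c x₁ x₂ }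

/-- The perspective function `r·F(θ/r)` with the convention `r·F(θ/r) = θ·F'_∞` for `r = 0`. -/
def perspFn (F : EntropyFn) (r θ : ℝ) : ℝ≥0∞ :=
  if r = 0 then ENNReal.ofReal θ * F.recC else ENNReal.ofReal r * F.F (θ / r)

/-- The homogeneous marginal perspective cost `H(x₁,r₁;x₂,r₂)` (the dependence on
`(x₁,x₂)` is through the value `c = c(x₁,x₂)`). -/
def Hcost (F₁ F₂ : EntropyFn) (c : ℝ≥0∞) (r₁ r₂ : ℝ) : ℝ≥0∞ :=
  if c ≠ ∞ then
    ⨅ θ : Ioi (0:ℝ), perspFn F₁ r₁ (θ : ℝ) + perspFn F₂ r₂ (θ : ℝ) + ENNReal.ofReal (θ : ℝ) * c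
  else F₁.F 0 * ENNReal.ofReal r₁ + F₂.F 0 * ENNReal.ofReal r₂

/-- The functional `ℋ(μ₁,μ₂|γ)`. -/
def hMargFun (F₁ F₂ : EntropyFn) (c : ↥X → ↥X → ℝ≥0∞) (μ₁ μ₂ : Measure ↥X)
    (γ : Measure (↥X × ↥X)) : ℝ≥0∞ :=
  (∫⁻ q, Hcost F₁ F₂ (c q.1 q.2) ((μ₁.rnDeriv γ.fst q.1).toReal)
      ((μ₂.rnDeriv γ.snd q.2).toReal) ∂γ)
    + F₁.F 0 * (μ₁.singularPart γ.fst) Set.univ + F₂.F 0 * (μ₂.singularPart γ.snd) Set.univ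

/-- The functional `ℛ(μ₁,μ₂|γ)`. -/
def rMargFun (F₁ F₂ : EntropyFn) (c : ↥X → ↥X → ℝ≥0∞) (μ₁ μ₂ : Measure ↥X)
    (γ : Measure (↥X × ↥X)) : ℝ≥0∞ :=
  revEntF F₁ μ₁ γ.fst + revEntF F₂ μ₂ γ.snd + ∫⁻ q, c q.1 q.2 ∂γ

/-- The first `p`-homogeneous marginal of a measure on `Y × Y`, `Y = X × [0,∞)`. -/
def hMarg1 (p : ℝ) (α : Measure ((↥X × ℝ≥0) × (↥X × ℝ≥0))) : Measure ↥X :=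
  Measure.map (fun q => q.1.1) (α.withDensity fun q => (q.1.2 : ℝ≥0∞) ^ p)

/-- The second `p`-homogeneous marginal of a measure on `Y × Y`, `Y = X × [0,∞)`. -/
def hMarg2 (p : ℝ) (α : Measure ((↥X × ℝ≥0) × (↥X × ℝ≥0))) : Measure ↥X :=
  Measure.map (fun q => q.2.1) (α.withDensity fun q => (q.2.2 : ℝ≥0∞) ^ p)

/-- Membership in the homogeneous constraint set `ℋ^p_{M,≤}(μ₁,μ₂)`. -/
def memHpM (p : ℝ) (μ₁ μ₂ : Measure ↥X) (α : Measure ((↥X × ℝ≥0) × (↥X × ℝ≥0))) : Prop :=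
  IsFiniteMeasure α ∧ (∫⁻ q, (q.1.2 : ℝ≥0∞) ^ p + (q.2.2 : ℝ≥0∞) ^ p ∂α) ≠ ∞ ∧
    hMarg1 p α ≤ μ₁ ∧ hMarg2 p α ≤ μ₂ ∧
    ∀ h : ↥X →ᵇ ℝ, (∫ q, h q.1.1 * ((q.2.1 : ℝ) - (q.1.1 : ℝ)) ∂α) = 0

end Martingale

/-!
For superlinear `F` the functions `F°` and `R*` are adjoint. Substituting `s = 1/u` in the
definition of `R*` turns `sψ - R(s) ≤ φ` into `ψ ≤ φu + F(u)`, and `s = 0` imposes no constraint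
because `R(0) = ∞`. So `ψ ≤ F°(φ)` if and only if `ψ ≤ F(0)` and `R*(ψ) ≤ φ`. Hence `φ := R*(ψ)`
turns a pair in `Λ_R` into a pair in `Λ` with `ψ ≤ F°(φ)`, and `ψ := F°(φ) - ε` turns a pair in `Λ`
into a pair in `Λ_R`, at a cost vanishing with `ε` because the measures are finite. Both maps
preserve continuity and boundedness: `F°` is finite and concave on `ℝ`, and `R*`, whose epigraph is
the reflection of the hypograph of `F°`, is finite and convex on `(-∞, F(0))`.
-/

lemma coe_le_coe_add_coe_ennreal_iff {a b : ℝ} {x : ℝ≥0∞} :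
    (a : EReal) ≤ b + (x : EReal) ↔ (x ≠ ∞ → a ≤ b + x.toReal) := by
  by_cases hx : x = ∞
  · simp [hx]
  · rw [← EReal.coe_ennreal_toReal hx, ← EReal.coe_add, EReal.coe_le_coe_iff]
    exact ⟨fun h _ => h, fun h => h hx⟩

lemma frequently_ofReal_mul_lt_of_recessionOf_eq_top {G : ℝ → ℝ≥0∞} (hG : recessionOf G = ∞)
    (M : ℝ) : ∃ᶠ s : ℝ in atTop, ENNReal.ofReal (M * s) < G s := by
  have hlim : ENNReal.ofReal M < limsup (fun s : ℝ => G s / ENNReal.ofReal s) atTop :=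
    ENNReal.ofReal_lt_top.trans_eq hG.symm
  refine ((frequently_lt_of_lt_limsup (by isBoundedDefault) hlim).and_eventually
    (eventually_gt_atTop 0)).mono fun s hs => ?_
  rw [ENNReal.ofReal_mul' hs.2.le]
  exact (ENNReal.lt_div_iff_mul_lt (Or.inl (by simpa using hs.2)) (Or.inl (by simp))).mp hs.1

lemma exists_boundedContinuousFunction_eq_comp {X α β : Type*} [TopologicalSpace X]
    [PseudoMetricSpace α] [ProperSpace α] [PseudoMetricSpace β] (f : X →ᵇ α) {g : α → β}
    (hg : ContinuousOn g (closure (range f))) : ∃ h : X →ᵇ β, ∀ x, h x = g (f x) := by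
  have hmem : ∀ x, f x ∈ closure (range f) := fun x => subset_closure (mem_range_self x)
  obtain ⟨K, hK⟩ := Metric.isBounded_iff.mp
    (f.isBounded_range.isCompact_closure.image_of_continuousOn hg).isBounded
  exact ⟨.mkOfBound ⟨fun x => g (f x), hg.comp_continuous f.continuous hmem⟩ K fun x y =>
    hK (mem_image_of_mem g (hmem x)) (mem_image_of_mem g (hmem y)), fun _ => rfl⟩

section eIntegral

variable {X : Type*} [MeasurableSpace X] (μ : Measure X)

lemma posE_coe (a : ℝ) : posE (a : EReal) = ENNReal.ofReal a := by
  simp [posE]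

lemma posE_mono : Monotone posE := by
  intro a b hab
  by_cases hb : b = ⊤
  · simp [posE, hb]
  have ha : a ≠ ⊤ := fun ha => hb (top_le_iff.mp (ha ▸ hab))
  simp only [posE, if_neg ha, if_neg hb]
  by_cases hbot : a = ⊥
  · simp [hbot]
  · exact ENNReal.ofReal_le_ofReal (EReal.toReal_le_toReal hab hbot hb)

lemma eIntegral_mono {f g : X → EReal} (hfg : ∀ x, f x ≤ g x) :
    eIntegral μ f ≤ eIntegral μ g :=
  EReal.sub_le_sub
    (EReal.coe_ennreal_le_coe_ennreal_iff.mpr (lintegral_mono fun x => posE_mono (hfg x)))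
    (EReal.coe_ennreal_le_coe_ennreal_iff.mpr
      (lintegral_mono fun x => posE_mono (EReal.neg_le_neg_iff.mpr (hfg x))))

lemma eIntegral_coe {f : X → ℝ} (hf : Integrable f μ) :
    eIntegral μ (fun x => (f x : EReal)) = ((∫ x, f x ∂μ : ℝ) : EReal) := by
  simp only [eIntegral, ← EReal.coe_neg, posE_coe]
  rw [integral_eq_lintegral_pos_part_sub_lintegral_neg_part hf, EReal.coe_sub,
    EReal.coe_ennreal_toReal hf.lintegral_lt_top.ne,
    EReal.coe_ennreal_toReal (show Integrable (fun x => -f x) μ from hf.neg).lintegral_lt_top.ne]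

end eIntegral

namespace EntropyFn

variable {F : EntropyFn}

/-- The effective domain `D(F) = {s ≥ 0 : F(s) < ∞}`. On it `F` is handled through the real number
`(F.F s).toReal`. -/
def effDomain (F : EntropyFn) : Set ℝ := {s | 0 ≤ s ∧ F.F s ≠ ∞}

lemma convexOn_toReal (F : EntropyFn) : ConvexOn ℝ F.effDomain fun s => (F.F s).toReal := by
  have key : ∀ ⦃u⦄, u ∈ F.effDomain → ∀ ⦃v⦄, v ∈ F.effDomain → ∀ ⦃a b : ℝ⦄, 0 ≤ a → 0 ≤ b →
      a + b = 1 →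
      F.F (a • u + b • v) ≤ ENNReal.ofReal (a * (F.F u).toReal + b * (F.F v).toReal) := by
    intro u hu v hv a b ha hb hab
    obtain rfl : b = 1 - a := by linarith
    rw [ENNReal.ofReal_add (by positivity) (by positivity), ENNReal.ofReal_mul ha,
      ENNReal.ofReal_mul hb, ENNReal.ofReal_toReal hu.2, ENNReal.ofReal_toReal hv.2]
    exact F.convex' u hu.1 v hv.1 a ha (by linarith)
  refine ⟨fun u hu v hv a b ha hb hab => ⟨?_, ?_⟩, fun u hu v hv a b ha hb hab => ?_⟩
  · exact add_nonneg (mul_nonneg ha hu.1) (mul_nonneg hb hv.1)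
  · exact ((key hu hv ha hb hab).trans_lt ENNReal.ofReal_lt_top).ne
  · exact ENNReal.toReal_le_of_le_ofReal (by positivity) (key hu hv ha hb hab)

lemma Superlinear.exists_affine_le (hF : F.Superlinear) (M : ℝ) :
    ∃ B : ℝ, ∀ u ∈ F.effDomain, M * u - B ≤ (F.F u).toReal := by
  obtain ⟨u₀, hu₀, hFu₀⟩ := F.dom
  obtain ⟨s, hgrowth, hs⟩ := ((frequently_ofReal_mul_lt_of_recessionOf_eq_top hF
    (|M| + 1)).and_eventually (eventually_ge_atTop (u₀ + 1 + (F.F u₀).toReal))).exists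
  have hFu₀_nonneg := ENNReal.toReal_nonneg (a := F.F u₀)
  have hu₀s : u₀ < s := by linarith
  refine ⟨|M| * s, fun u hu => ?_⟩
  rcases le_or_gt u s with hus | hsu
  · have hMu : M * u ≤ |M| * s :=
      mul_le_mul (le_abs_self M) hus hu.1 (abs_nonneg M)
    linarith [ENNReal.toReal_nonneg (a := F.F u)]
  · have hu₀_mem : u₀ ∈ F.effDomain := ⟨hu₀.le, hFu₀⟩
    have hs_mem : s ∈ F.effDomain :=
      F.convexOn_toReal.1.ordConnected.out hu₀_mem hu ⟨hu₀s.le, hsu.le⟩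
    have hFs : (|M| + 1) * s ≤ (F.F s).toReal :=
      (ENNReal.ofReal_le_iff_le_toReal hs_mem.2).mp hgrowth.le
    have hM_le : M ≤ ((F.F s).toReal - (F.F u₀).toReal) / (s - u₀) := by
      rw [le_div_iff₀ (by linarith)]
      nlinarith [le_abs_self M, abs_nonneg M]
    have hslope := hM_le.trans (F.convexOn_toReal.secant_mono hu₀_mem hs_mem hu hu₀s.ne'
      (hu₀s.trans hsu).ne' hsu.le)
    rw [le_div_iff₀ (by linarith)] at hslope
    nlinarith [le_abs_self M, abs_nonneg M]

lemma le_circ_iff {φ ψ : ℝ} :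
    (ψ : EReal) ≤ F.circ φ ↔ ∀ u ∈ F.effDomain, ψ ≤ φ * u + (F.F u).toReal := by
  simp only [circ, le_iInf_iff, Subtype.forall, mem_Ici, ← EReal.coe_mul,
    coe_le_coe_add_coe_ennreal_iff, effDomain, mem_ofPred_eq, and_imp]

lemma le_apply_zero_of_le_circ {φ ψ : ℝ} (h : (ψ : EReal) ≤ F.circ φ) :
    (ψ : EReal) ≤ (F.F 0 : EReal) := by
  simpa using h.trans (iInf_le _ (⟨0, self_mem_Ici⟩ : Ici (0 : ℝ)))

/-- The real-valued version of `F°`; it represents `F°` when `F` is superlinear. -/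
def circReal (F : EntropyFn) (φ : ℝ) : ℝ := (F.circ φ).toReal

namespace Superlinear

lemma coe_circReal (hF : F.Superlinear) (φ : ℝ) : (F.circReal φ : EReal) = F.circ φ := by
  refine EReal.coe_toReal (fun htop => ?_) (fun hbot => ?_)
  · obtain ⟨u, hu, hFu⟩ := F.dom
    have hle := le_circ_iff.mp (htop ▸ le_top : ((φ * u + (F.F u).toReal + 1 : ℝ) : EReal) ≤ _)
      u ⟨hu.le, hFu⟩
    linarith
  · obtain ⟨B, hB⟩ := hF.exists_affine_le (-φ)
    have hle : ((-B : ℝ) : EReal) ≤ F.circ φ :=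
      le_circ_iff.mpr fun u hu => by linarith [hB u hu]
    exact EReal.coe_ne_bot _ (le_bot_iff.mp (hbot ▸ hle))

lemma le_circReal_iff (hF : F.Superlinear) {φ ψ : ℝ} :
    ψ ≤ F.circReal φ ↔ ∀ u ∈ F.effDomain, ψ ≤ φ * u + (F.F u).toReal := by
  rw [← EReal.coe_le_coe_iff, hF.coe_circReal, le_circ_iff]

lemma circDom_eq_univ (hF : F.Superlinear) : F.circDom = univ :=
  eq_univ_of_forall fun φ => ne_of_eq_of_ne (hF.coe_circReal φ).symm (EReal.coe_ne_bot _)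

lemma concaveOn_circReal (hF : F.Superlinear) : ConcaveOn ℝ univ F.circReal := by
  refine ⟨convex_univ, fun φ _ φ' _ a b ha hb hab => hF.le_circReal_iff.mpr fun u hu => ?_⟩
  calc a * F.circReal φ + b * F.circReal φ'
      ≤ a * (φ * u + (F.F u).toReal) + b * (φ' * u + (F.F u).toReal) := by
        gcongr <;> exact hF.le_circReal_iff.mp le_rfl u hu
    _ = (a * φ + b * φ') * u + (a + b) * (F.F u).toReal := by ring
    _ = (a • φ + b • φ') * u + (F.F u).toReal := by rw [hab, one_mul, smul_eq_mul, smul_eq_mul]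

lemma continuous_circReal (hF : F.Superlinear) : Continuous F.circReal :=
  continuousOn_univ.mp (hF.concaveOn_circReal.continuousOn isOpen_univ)

end Superlinear

lemma mul_sub_revF_inv_le_iff {u φ ψ : ℝ} (hu : 0 < u) :
    ((u⁻¹ * ψ : ℝ) : EReal) - (F.revF u⁻¹ : EReal) ≤ φ ↔
      (F.F u ≠ ∞ → ψ ≤ φ * u + (F.F u).toReal) := by
  have hu' : 0 < u⁻¹ := inv_pos.mpr hu
  rw [EReal.sub_le_iff_le_add (Or.inr (EReal.coe_ne_top φ)) (Or.inr (EReal.coe_ne_bot φ)),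
    coe_le_coe_add_coe_ennreal_iff, revF, if_pos hu', one_div, inv_inv, ENNReal.toReal_mul,
    ENNReal.toReal_ofReal hu'.le]
  refine imp_congr (not_congr ?_) ?_
  · simp [ENNReal.mul_eq_top, hu]
  · rw [← mul_le_mul_iff_right₀ hu, mul_add, mul_inv_cancel_left₀ hu.ne',
      mul_inv_cancel_left₀ hu.ne', mul_comm u φ]

namespace Superlinear

lemma revConj_le_iff (hF : F.Superlinear) {φ ψ : ℝ} :
    F.revConj ψ ≤ φ ↔ ∀ u ∈ F.effDomain, 0 < u → ψ ≤ φ * u + (F.F u).toReal := by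
  simp only [revConj, iSup_le_iff, Subtype.forall, mem_Ici]
  refine ⟨fun h u hu hupos => (mul_sub_revF_inv_le_iff hupos).mp
    (h u⁻¹ (inv_nonneg.mpr hu.1)) hu.2, fun h s hs => ?_⟩
  rcases hs.eq_or_lt with rfl | hs
  · simp [revF, show F.recC = ∞ from hF]
  · have hs' : 0 < s⁻¹ := inv_pos.mpr hs
    simpa only [inv_inv] using
      (mul_sub_revF_inv_le_iff hs').mpr fun hfin => h s⁻¹ ⟨hs'.le, hfin⟩ hs'

lemma revConj_le_of_le_circ (hF : F.Superlinear) {φ ψ : ℝ} (h : (ψ : EReal) ≤ F.circ φ) :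
    F.revConj ψ ≤ φ :=
  hF.revConj_le_iff.mpr fun u hu _ => le_circ_iff.mp h u hu

theorem le_circ_iff_revConj_le (hF : F.Superlinear) {φ ψ : ℝ} (hψ : (ψ : EReal) ≤ (F.F 0 : EReal)) :
    (ψ : EReal) ≤ F.circ φ ↔ F.revConj ψ ≤ φ := by
  refine ⟨hF.revConj_le_of_le_circ, fun h => le_circ_iff.mpr fun u hu => ?_⟩
  rw [hF.revConj_le_iff] at h
  rcases hu.1.eq_or_lt with rfl | hupos
  · rwa [mul_zero, zero_add, ← EReal.coe_le_coe_iff, EReal.coe_ennreal_toReal hu.2]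
  · exact h u hu hupos

end Superlinear

lemma exists_le_circ_of_lt {ψ : ℝ} (hψ : (ψ : EReal) < (F.F 0 : EReal)) :
    ∃ φ : ℝ, (ψ : EReal) ≤ F.circ φ := by
  have hlsc := continuous_coe_ennreal_ereal.comp_lowerSemicontinuousOn F.lsc
    EReal.coe_ennreal_strictMono.monotone 0 self_mem_Ici ψ hψ
  obtain ⟨δ, hδ, hnear⟩ := Metric.eventually_nhds_iff.mp (eventually_nhdsWithin_iff.mp hlsc)
  refine ⟨|ψ| / δ, le_circ_iff.mpr fun u hu => ?_⟩
  rcases lt_or_ge u δ with huδ | hδu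
  · have hlt : (ψ : EReal) < F.F u :=
      hnear (by rwa [Real.dist_0_eq_abs, abs_of_nonneg hu.1]) hu.1
    rw [← EReal.coe_ennreal_toReal hu.2, EReal.coe_lt_coe_iff] at hlt
    linarith [mul_nonneg (div_nonneg (abs_nonneg ψ) hδ.le) hu.1]
  · calc ψ ≤ |ψ| / δ * δ := by rw [div_mul_cancel₀ _ hδ.ne']; exact le_abs_self ψ
      _ ≤ |ψ| / δ * u := by gcongr
      _ ≤ |ψ| / δ * u + (F.F u).toReal := le_add_of_nonneg_right ENNReal.toReal_nonneg

/-- The real-valued version of `R*`; it represents `R*` below `F(0)` when `F` is superlinear. -/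
def revConjReal (F : EntropyFn) (ψ : ℝ) : ℝ := (F.revConj ψ).toReal

namespace Superlinear

lemma coe_revConjReal (hF : F.Superlinear) {ψ : ℝ} (hψ : (ψ : EReal) < (F.F 0 : EReal)) :
    (F.revConjReal ψ : EReal) = F.revConj ψ := by
  refine EReal.coe_toReal (fun htop => ?_) (fun hbot => ?_)
  · obtain ⟨φ, hφ⟩ := exists_le_circ_of_lt hψ
    exact EReal.coe_ne_top φ (top_le_iff.mp (htop ▸ (hF.le_circ_iff_revConj_le hψ.le).mp hφ))
  · obtain ⟨u, hu, hFu⟩ := F.dom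
    have hle := hF.revConj_le_iff.mp
      (hbot ▸ bot_le : F.revConj ψ ≤ ((ψ - (F.F u).toReal - 1) / u : ℝ)) u ⟨hu.le, hFu⟩ hu
    rw [div_mul_cancel₀ _ hu.ne'] at hle
    linarith

lemma revConjReal_le_iff (hF : F.Superlinear) {φ ψ : ℝ} (hψ : (ψ : EReal) < (F.F 0 : EReal)) :
    F.revConjReal ψ ≤ φ ↔ ψ ≤ F.circReal φ := by
  rw [← EReal.coe_le_coe_iff, hF.coe_revConjReal hψ, ← hF.le_circ_iff_revConj_le hψ.le,
    ← hF.coe_circReal, EReal.coe_le_coe_iff]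

lemma convexOn_revConjReal (hF : F.Superlinear) :
    ConvexOn ℝ {ψ : ℝ | (ψ : EReal) < (F.F 0 : EReal)} F.revConjReal := by
  have hconv : Convex ℝ {ψ : ℝ | (ψ : EReal) < (F.F 0 : EReal)} :=
    (ordConnected_Iio.preimage_mono EReal.coe_strictMono.monotone).convex
  refine ⟨hconv, fun ψ hψ ψ' hψ' a b ha hb hab =>
    (hF.revConjReal_le_iff (hconv hψ hψ' ha hb hab)).mpr ?_⟩
  calc a • ψ + b • ψ'
      ≤ a • F.circReal (F.revConjReal ψ) + b • F.circReal (F.revConjReal ψ') := by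
        gcongr
        · exact (hF.revConjReal_le_iff hψ).mp le_rfl
        · exact (hF.revConjReal_le_iff hψ').mp le_rfl
    _ ≤ F.circReal (a • F.revConjReal ψ + b • F.revConjReal ψ') :=
        hF.concaveOn_circReal.2 (mem_univ _) (mem_univ _) ha hb hab

lemma continuousOn_revConjReal (hF : F.Superlinear) :
    ContinuousOn F.revConjReal {ψ : ℝ | (ψ : EReal) < (F.F 0 : EReal)} :=
  hF.convexOn_revConjReal.continuousOn (isOpen_Iio.preimage continuous_coe_real_ereal)

variable {X : Type*} [TopologicalSpace X]

lemma exists_boundedContinuousFunction_eq_circ (hF : F.Superlinear) (φ : X →ᵇ ℝ) :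
    ∃ χ : X →ᵇ ℝ, ∀ x, F.circ (φ x : ℝ) = (χ x : EReal) := by
  obtain ⟨χ, hχ⟩ :=
    exists_boundedContinuousFunction_eq_comp φ hF.continuous_circReal.continuousOn
  exact ⟨χ, fun x => by rw [hχ, hF.coe_circReal]⟩

lemma exists_boundedContinuousFunction_eq_revConj_le_circ (hF : F.Superlinear) {ψ : X →ᵇ ℝ}
    (hψ : ∃ b : ℝ, (b : EReal) < (F.F 0 : EReal) ∧ ∀ x, ψ x ≤ b) :
    ∃ φ : X →ᵇ ℝ, (∀ x, F.revConj (ψ x) = (φ x : EReal)) ∧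
      ∀ x, (ψ x : EReal) ≤ F.circ (φ x : ℝ) := by
  obtain ⟨b, hb, hψb⟩ := hψ
  have hrange : closure (range ψ) ⊆ {r : ℝ | (r : EReal) < (F.F 0 : EReal)} :=
    (closure_minimal (range_subset_iff.mpr hψb) isClosed_Iic).trans fun r hr =>
      (EReal.coe_le_coe_iff.mpr hr).trans_lt hb
  have hψ_lt : ∀ x, (ψ x : EReal) < (F.F 0 : EReal) := fun x =>
    hrange (subset_closure (mem_range_self x))
  obtain ⟨φ, hφ⟩ :=
    exists_boundedContinuousFunction_eq_comp ψ (hF.continuousOn_revConjReal.mono hrange)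
  have hrevConj : ∀ x, F.revConj (ψ x) = (φ x : EReal) := fun x => by
    rw [hφ, hF.coe_revConjReal (hψ_lt x)]
  exact ⟨φ, hrevConj, fun x => (hF.le_circ_iff_revConj_le (hψ_lt x).le).mpr (hrevConj x).le⟩

end Superlinear

end EntropyFn

lemma exists_coe_lt_and_forall_sub_le {X : Type*} {c : ℝ≥0∞} {f : X → ℝ}
    (hf : BddAbove (range f)) (hfc : ∀ x, (f x : EReal) ≤ (c : EReal)) {ε : ℝ} (hε : 0 < ε) :
    ∃ b : ℝ, (b : EReal) < (c : EReal) ∧ ∀ x, f x - ε ≤ b := by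
  by_cases hc : c = ∞
  · obtain ⟨K, hK⟩ := hf
    exact ⟨K, hc ▸ EReal.coe_lt_top K, fun x =>
      (sub_le_self _ hε.le).trans (hK (mem_range_self x))⟩
  · simp only [← EReal.coe_ennreal_toReal hc, EReal.coe_le_coe_iff, EReal.coe_lt_coe_iff] at hfc ⊢
    exact ⟨c.toReal - ε, sub_lt_self _ hε, fun x => sub_le_sub_right (hfc x) ε⟩

lemma integral_sub_const {X : Type*} [MeasurableSpace X] {μ : Measure X} [IsFiniteMeasure μ]
    {f : X → ℝ} (hf : Integrable f μ) (c : ℝ) :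
    ∫ x, (f x - c) ∂μ = ∫ x, f x ∂μ - μ.real univ * c := by
  rw [integral_sub hf (integrable_const c), integral_const, smul_eq_mul]

section DualFeasibility

variable {X₁ X₂ : Type*} [TopologicalSpace X₁] [TopologicalSpace X₂] [MeasurableSpace X₂]
  [OpensMeasurableSpace X₂] {C : X₁ → ProbabilityMeasure X₂ → EReal} {F₁ F₂ : EntropyFn}

lemma exists_mem_lamSet_le_circ (hF₁ : F₁.Superlinear) (hF₂ : F₂.Superlinear)
    {ψ : (X₁ →ᵇ ℝ) × (X₂ →ᵇ ℝ)} (hψ : ψ ∈ lamRSet C F₁ F₂) :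
    ∃ φ ∈ lamSet C F₁ F₂, (∀ x, (ψ.1 x : EReal) ≤ F₁.circ (φ.1 x : ℝ)) ∧
      ∀ x, (ψ.2 x : EReal) ≤ F₂.circ (φ.2 x : ℝ) := by
  obtain ⟨hψ₁, hψ₂, hψC⟩ := hψ
  obtain ⟨φ₁, hφ₁, hle₁⟩ := hF₁.exists_boundedContinuousFunction_eq_revConj_le_circ hψ₁
  obtain ⟨φ₂, hφ₂, hle₂⟩ := hF₂.exists_boundedContinuousFunction_eq_revConj_le_circ hψ₂
  refine ⟨(φ₁, φ₂), ⟨?_, ?_, fun x₁ p => ?_⟩, hle₁, hle₂⟩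
  · simp [hF₁.circDom_eq_univ]
  · simp [hF₂.circDom_eq_univ]
  · rw [EReal.coe_add, ← eIntegral_coe _ (φ₂.integrable _)]
    simpa only [hφ₁, hφ₂] using hψC x₁ p

lemma sub_const_mem_lamRSet (hF₁ : F₁.Superlinear) (hF₂ : F₂.Superlinear)
    {φ χ : (X₁ →ᵇ ℝ) × (X₂ →ᵇ ℝ)} (hφ : φ ∈ lamSet C F₁ F₂)
    (hχ₁ : ∀ x, (χ.1 x : EReal) ≤ F₁.circ (φ.1 x : ℝ))
    (hχ₂ : ∀ x, (χ.2 x : EReal) ≤ F₂.circ (φ.2 x : ℝ)) {ε : ℝ} (hε : 0 < ε) :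
    (χ.1 - .const X₁ ε, χ.2 - .const X₂ ε) ∈ lamRSet C F₁ F₂ := by
  have sub_le_circ : ∀ {χ φ : ℝ} {F : EntropyFn}, (χ : EReal) ≤ F.circ φ →
      ((χ - ε : ℝ) : EReal) ≤ F.circ φ :=
    (EReal.coe_le_coe_iff.mpr (sub_le_self _ hε.le)).trans
  refine ⟨exists_coe_lt_and_forall_sub_le χ.1.isBounded_range.bddAbove
      (fun x => EntropyFn.le_apply_zero_of_le_circ (hχ₁ x)) hε,
    exists_coe_lt_and_forall_sub_le χ.2.isBounded_range.bddAbove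
      (fun x => EntropyFn.le_apply_zero_of_le_circ (hχ₂ x)) hε,
    fun x₁ p => ?_⟩
  calc F₁.revConj (χ.1 x₁ - ε) + eIntegral p (fun x₂ => F₂.revConj (χ.2 x₂ - ε))
      ≤ φ.1 x₁ + eIntegral p (fun x₂ => (φ.2 x₂ : EReal)) :=
        add_le_add (hF₁.revConj_le_of_le_circ (sub_le_circ (hχ₁ x₁)))
          (eIntegral_mono _ fun x₂ => hF₂.revConj_le_of_le_circ (sub_le_circ (hχ₂ x₂)))
    _ = ((φ.1 x₁ + ∫ x₂, φ.2 x₂ ∂(p : Measure X₂) : ℝ) : EReal) := by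
        rw [eIntegral_coe _ (φ.2.integrable _), EReal.coe_add]
    _ ≤ C x₁ p := hφ.2.2 x₁ p

end DualFeasibility

theorem stmt14_general
    {X₁ X₂ : Type*} [TopologicalSpace X₁] [MeasurableSpace X₁] [OpensMeasurableSpace X₁]
    [TopologicalSpace X₂] [MeasurableSpace X₂] [OpensMeasurableSpace X₂]
    (C : X₁ → ProbabilityMeasure X₂ → EReal)
    (F₁ F₂ : EntropyFn) (hF₁ : F₁.Superlinear) (hF₂ : F₂.Superlinear)
    (μ₁ : Measure X₁) (μ₂ : Measure X₂) [IsFiniteMeasure μ₁] [IsFiniteMeasure μ₂] :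
    sSup { e : EReal | ∃ φ ∈ lamRSet C F₁ F₂,
        e = (((∫ x, φ.1 x ∂μ₁) + ∫ x, φ.2 x ∂μ₂ : ℝ) : EReal) }
      = sSup { e : EReal | ∃ φ ∈ lamSet C F₁ F₂,
          e = eIntegral μ₁ (fun x => F₁.circ (φ.1 x)) +
              eIntegral μ₂ (fun x => F₂.circ (φ.2 x)) } := by
  refine le_antisymm (sSup_le ?_) (sSup_le ?_)
  · rintro _ ⟨ψ, hψ, rfl⟩
    obtain ⟨φ, hφ, hle₁, hle₂⟩ := exists_mem_lamSet_le_circ hF₁ hF₂ hψ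
    refine le_trans ?_ (le_sSup ⟨φ, hφ, rfl⟩)
    rw [EReal.coe_add, ← eIntegral_coe μ₁ (ψ.1.integrable μ₁),
      ← eIntegral_coe μ₂ (ψ.2.integrable μ₂)]
    exact add_le_add (eIntegral_mono μ₁ hle₁) (eIntegral_mono μ₂ hle₂)
  · rintro _ ⟨φ, hφ, rfl⟩
    obtain ⟨χ₁, hχ₁⟩ := hF₁.exists_boundedContinuousFunction_eq_circ φ.1
    obtain ⟨χ₂, hχ₂⟩ := hF₂.exists_boundedContinuousFunction_eq_circ φ.2
    simp only [hχ₁, hχ₂, eIntegral_coe _ (χ₁.integrable μ₁), eIntegral_coe _ (χ₂.integrable μ₂)]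
    rw [← EReal.coe_add, ← EReal.ge_of_forall_gt_iff_ge]
    intro z hz
    obtain ⟨ε, hε, hlt⟩ := exists_pos_mul_lt (sub_pos.mpr (EReal.coe_lt_coe_iff.mp hz))
      (μ₁.real univ + μ₂.real univ)
    refine le_trans (EReal.coe_le_coe_iff.mpr ?_) (le_sSup ⟨_,
      sub_const_mem_lamRSet (χ := (χ₁, χ₂)) hF₁ hF₂ hφ (fun x => (hχ₁ x).ge)
        (fun x => (hχ₂ x).ge) hε, rfl⟩)
    change z ≤ (∫ x, (χ₁ x - ε) ∂μ₁) + ∫ x, (χ₂ x - ε) ∂μ₂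
    rw [integral_sub_const (χ₁.integrable μ₁), integral_sub_const (χ₂.integrable μ₂)]
    linarith

theorem stmt14
    {X₁ : Type*} [MetricSpace X₁] [PolishSpace X₁] [MeasurableSpace X₁] [BorelSpace X₁]
    [LocallyCompactSpace X₁]
    {X₂ : Type*} [MetricSpace X₂] [PolishSpace X₂] [MeasurableSpace X₂] [BorelSpace X₂]
    [LocallyCompactSpace X₂] [Nonempty X₂]
    (C : X₁ → ProbabilityMeasure X₂ → EReal)
    (hClsc : LowerSemicontinuous fun q : X₁ × ProbabilityMeasure X₂ => C q.1 q.2)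
    (hCbdd : ∃ K : ℝ, ∀ x p, (K : EReal) ≤ C x p)
    (hCconv : ∀ (x : X₁) (p q m : ProbabilityMeasure X₂) (t : ℝ), 0 ≤ t → t ≤ 1 →
      (m : Measure X₂) = ENNReal.ofReal t • (p : Measure X₂)
          + ENNReal.ofReal (1 - t) • (q : Measure X₂) →
      C x m ≤ (t : EReal) * C x p + ((1 - t : ℝ) : EReal) * C x q)
    (F₁ F₂ : EntropyFn) (hF₁ : F₁.Superlinear) (hF₂ : F₂.Superlinear) (hBM : HasBM X₂ F₂)
    (μ₁ : Measure X₁) (μ₂ : Measure X₂) [IsFiniteMeasure μ₁] [IsFiniteMeasure μ₂] :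
    sSup { e : EReal | ∃ φ ∈ lamRSet C F₁ F₂,
        e = (((∫ x, φ.1 x ∂μ₁) + ∫ x, φ.2 x ∂μ₂ : ℝ) : EReal) }
      = sSup { e : EReal | ∃ φ ∈ lamSet C F₁ F₂,
          e = eIntegral μ₁ (fun x => F₁.circ (φ.1 x)) +
              eIntegral μ₂ (fun x => F₂.circ (φ.2 x)) } := by
  exact stmt14_general C F₁ F₂ hF₁ hF₂ μ₁ μ₂
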